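/- Let P be a vector space partition of F_q^v of type d_l^{u_l}⋯d_2^{u_2}d_1^{u_1}, where u_1, u_2 > 0 and d_l > ⋯ > d_2 > d_1 ≥ 1. If q^{d_2−d_1} divides u_1 and d_2 ≥ 2d_1, then u_1 ≥ q^{d_2}. -/

import Mathlib

/-!
Let `n` be the number of members of the smallest dimension `a`, let `b` bound the remaining
dimensions from below, and for a functional `f` let `A f` count the `a`-dimensional members inside
`ker f`. If all members had dimension `a`, their number would be `1` modulo `q`, so some member has
dimension at least `b`, and `q ^ (b - 1)` divides the number of solutions of `f x = 1`. Counting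
these solutions member by member gives `q ^ (b - a) ∣ n - A f` for `f ≠ 0`, hence
`q ^ (b - a) ∣ A f` for every `f`, and so `q ^ (b - a) * A f ≤ A f ^ 2`. Summing over `f`, where
the first two moments of `A` are known because distinct members meet trivially, yields
`q ^ b < n + q ^ a`. As `q ^ a ≤ q ^ (b - a)` and `q ^ (b - a)` divides both `n` and `q ^ b`, this
forces `q ^ b ≤ n`.
-/

open Finset Module

section DoubleCounting

variable {F V : Type*} [Field F] [AddCommGroup V] [Module F V] [FiniteDimensional F V]

lemma ncard_dual_le_ker (U : Submodule F V) :
    {f : Dual F V | U ≤ LinearMap.ker f}.ncard = Nat.card F ^ (finrank F V - finrank F U) := by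
  have hset : {f : Dual F V | U ≤ LinearMap.ker f} = U.dualAnnihilator := by
    ext f
    exact (U.mem_dualAnnihilator f).symm
  rw [hset, ← Nat.card_coe_set_eq, SetLike.coe_sort_coe, natCard_eq_pow_finrank (K := F),
    ← Subspace.finrank_add_finrank_dualAnnihilator_eq U, Nat.add_sub_cancel_left]

open scoped Classical in
lemma sum_card_filter_le_ker [Fintype (Dual F V)] {ι : Type*} (s : Finset ι)
    (U : ι → Submodule F V) :
    ∑ f : Dual F V, #{i ∈ s | U i ≤ LinearMap.ker f} =
      ∑ i ∈ s, Nat.card F ^ (finrank F V - finrank F (U i)) := by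
  rw [← sum_congr rfl fun i _ ↦ ncard_dual_le_ker (U i)]
  simp only [Set.ncard_eq_toFinset_card', Set.toFinset_ofPred]
  exact sum_card_bipartiteAbove_eq_sum_card_bipartiteBelow
    fun (f : Dual F V) i ↦ U i ≤ LinearMap.ker f

lemma finrank_sup_of_disjoint {U W : Submodule F V} (h : Disjoint U W) :
    finrank F ↥(U ⊔ W) = finrank F U + finrank F W := by
  rw [← Submodule.finrank_sup_add_finrank_inf_eq U W, h.eq_bot, finrank_bot, add_zero]

variable {Q : Finset (Submodule F V)} {a : ℕ}

open scoped Classical in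
lemma sum_sq_card_filter_le_ker [Fintype (Dual F V)] (hdim : ∀ U ∈ Q, finrank F U = a)
    (hdisj : (Q : Set (Submodule F V)).PairwiseDisjoint id) :
    ∑ f : Dual F V, #{U ∈ Q | U ≤ LinearMap.ker f} ^ 2 =
      #Q * (Nat.card F ^ (finrank F V - a) + (#Q - 1) * Nat.card F ^ (finrank F V - 2 * a)) := by
  have hpairs (f : Dual F V) : #{U ∈ Q | U ≤ LinearMap.ker f} ^ 2 =
      #{p ∈ Q ×ˢ Q | p.1 ⊔ p.2 ≤ LinearMap.ker f} := by
    simp only [sup_le_iff, filter_product (· ≤ LinearMap.ker f) (· ≤ LinearMap.ker f),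
      card_product, sq]
  simp only [hpairs, sum_card_filter_le_ker, sum_product]
  refine sum_const_nat fun U hU ↦ ?_
  rw [← add_sum_erase Q _ hU, sup_idem, hdim U hU, ← card_erase_of_mem hU]
  congr 1
  refine sum_const_nat fun W hW ↦ ?_
  obtain ⟨hWU, hW⟩ := mem_erase.mp hW
  have hUW : Disjoint U W := hdisj hU hW hWU.symm
  rw [finrank_sup_of_disjoint hUW, hdim U hU, hdim W hW, two_mul]

open scoped Classical in
theorem mul_pow_lt_card_add_pow [Finite F] (hdim : ∀ U ∈ Q, finrank F U = a)
    (hdisj : (Q : Set (Submodule F V)).PairwiseDisjoint id) (hne : Q.Nonempty)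
    (ha : 2 * a ≤ finrank F V) {y : ℕ}
    (hdvd : ∀ f : Dual F V, y ∣ #{U ∈ Q | U ≤ LinearMap.ker f}) :
    y * Nat.card F ^ a < #Q + Nat.card F ^ a := by
  have := Module.finite_of_finite F (M := Dual F V)
  have := Fintype.ofFinite (Dual F V)
  set q := Nat.card F
  have hmoments : y * ∑ f : Dual F V, #{U ∈ Q | U ≤ LinearMap.ker f} ≤
      ∑ f : Dual F V, #{U ∈ Q | U ≤ LinearMap.ker f} ^ 2 := by
    rw [mul_sum]
    refine sum_le_sum fun f _ ↦ ?_
    rcases Nat.eq_zero_or_pos #{U ∈ Q | U ≤ LinearMap.ker f} with hzero | hpos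
    · simp only [hzero, mul_zero, zero_le]
    · rw [sq]
      exact Nat.mul_le_mul_right _ (Nat.le_of_dvd hpos (hdvd f))
  have hexp : finrank F V - a = finrank F V - 2 * a + a := by omega
  rw [sum_sq_card_filter_le_ker hdim hdisj, sum_card_filter_le_ker,
    sum_const_nat fun U hU ↦ by rw [hdim U hU], hexp, pow_add] at hmoments
  have hcancel : #Q * q ^ (finrank F V - 2 * a) * (y * q ^ a) ≤
      #Q * q ^ (finrank F V - 2 * a) * (q ^ a + (#Q - 1)) := by
    linarith
  have hQ : 0 < #Q := hne.card_pos
  have hle : y * q ^ a ≤ q ^ a + (#Q - 1) :=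
    Nat.le_of_mul_le_mul_left hcancel (Nat.mul_pos hQ (Nat.pow_pos Nat.card_pos))
  omega

end DoubleCounting

/-- A vector space partition: every nonzero vector lies in exactly one member. The zero
subspace is also allowed as a member. -/
def IsVectorSpacePartition {F V : Type*} [Semiring F] [AddCommMonoid V] [Module F V]
    (P : Finset (Submodule F V)) : Prop :=
  ∀ x : V, x ≠ 0 → ∃! U : Submodule F V, U ∈ P ∧ x ∈ U

/-- The members of `P` of dimension `k`; their number is `u_i` in the type of the partition
when `k = d_i`. -/
noncomputable def membersOfFinrank {F V : Type*} [Semiring F] [AddCommMonoid V] [Module F V]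
    (P : Finset (Submodule F V)) (k : ℕ) : Finset (Submodule F V) :=
  {U ∈ P | finrank F U = k}

lemma ncard_setOf_finrank_eq {F V : Type*} [Semiring F] [AddCommMonoid V] [Module F V]
    (P : Finset (Submodule F V)) (k : ℕ) :
    {U | U ∈ P ∧ finrank F U = k}.ncard = #(membersOfFinrank P k) := by
  rw [← Set.ncard_coe_finset, membersOfFinrank, coe_filter]

section Hyperplane

variable {F V : Type*} [Field F] [AddCommGroup V] [Module F V] [FiniteDimensional F V]

lemma ncard_apply_eq_one {f : Dual F V} (hf : f ≠ 0) :
    {x | f x = 1}.ncard = Nat.card F ^ (finrank F V - 1) := by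
  have hfiber : {x | f x = 1} ≃ LinearMap.ker f :=
    AddMonoidHom.fiberEquivKerOfSurjective (f := f.toAddMonoidHom) (LinearMap.surjective hf) 1
  rw [← Nat.card_coe_set_eq, Nat.card_congr hfiber, natCard_eq_pow_finrank (K := F),
    ← Dual.finrank_ker_add_one_of_ne_zero hf, Nat.add_sub_cancel]

lemma ncard_inter_apply_eq_one {U : Submodule F V} {f : Dual F V} (hU : ¬ U ≤ LinearMap.ker f) :
    ((U : Set V) ∩ {x | f x = 1}).ncard = Nat.card F ^ (finrank F U - 1) := by
  have hrestrict : f.domRestrict U ≠ 0 := fun h ↦ hU fun x hx ↦ LinearMap.congr_fun h ⟨x, hx⟩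
  rw [← ncard_apply_eq_one hrestrict, ← Set.ncard_image_of_injective _ Subtype.val_injective]
  congr 1
  ext x
  simp [and_comm]

end Hyperplane

namespace IsVectorSpacePartition

section Semiring

variable {F V : Type*} [Semiring F] [AddCommMonoid V] [Module F V] {P : Finset (Submodule F V)}

lemma pairwiseDisjoint (hP : IsVectorSpacePartition P) :
    (P : Set (Submodule F V)).PairwiseDisjoint id := by
  intro U hU W hW hUW
  refine Submodule.disjoint_def.mpr fun x hxU hxW ↦ ?_
  by_contra hx
  exact hUW ((hP x hx).unique ⟨hU, hxU⟩ ⟨hW, hxW⟩)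

lemma sum_ncard_inter [Finite V] (hP : IsVectorSpacePartition P) {S : Set V} (hS : 0 ∉ S) :
    ∑ U ∈ P, ((U : Set V) ∩ S).ncard = S.ncard := by
  have hcover : S = ⋃ U ∈ (P : Set (Submodule F V)), (U : Set V) ∩ S := by
    ext x
    simp only [Set.mem_iUnion, Set.mem_inter_iff, exists_prop]
    refine ⟨fun hx ↦ ?_, fun ⟨_, _, _, hx⟩ ↦ hx⟩
    obtain ⟨U, ⟨hU, hxU⟩, -⟩ := hP x (ne_of_mem_of_not_mem hx hS)
    exact ⟨U, hU, hxU, hx⟩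
  have hdisj : (P : Set (Submodule F V)).PairwiseDisjoint fun U ↦ (U : Set V) ∩ S := by
    intro U hU W hW hUW
    refine Set.disjoint_left.mpr fun x ⟨hxU, hxS⟩ ⟨hxW, _⟩ ↦ hS ?_
    exact Submodule.disjoint_def.mp (hP.pairwiseDisjoint hU hW hUW) x hxU hxW ▸ hxS
  conv_rhs => rw [hcover]
  rw [Set.Finite.ncard_biUnion P.finite_toSet (fun _ _ ↦ Set.toFinite _) hdisj,
    finsum_mem_coe_finset]

end Semiring

variable {F V : Type*} [Field F] [Finite F] [AddCommGroup V] [Module F V] [FiniteDimensional F V]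
  {P : Finset (Submodule F V)}

lemma sum_card_add_one (hP : IsVectorSpacePartition P) :
    ∑ U ∈ P, Nat.card F ^ finrank F U + 1 = Nat.card F ^ finrank F V + #P := by
  have := Module.finite_of_finite F (M := V)
  have hnonzero (U : Submodule F V) :
      Nat.card F ^ finrank F U = ((U : Set V) ∩ {0}ᶜ).ncard + 1 := by
    rw [← Set.sdiff_eq, Set.ncard_sdiff_singleton_add_one U.zero_mem, ← Nat.card_coe_set_eq,
      SetLike.coe_sort_coe, natCard_eq_pow_finrank (K := F) (V := U)]
  have htop := hnonzero ⊤
  rw [finrank_top, Submodule.top_coe, Set.univ_inter] at htop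
  rw [sum_congr rfl fun U _ ↦ hnonzero U, sum_add_distrib, hP.sum_ncard_inter (by simp), htop,
    sum_const, smul_eq_mul, mul_one]
  ring

lemma card_modEq_one [Nontrivial V] (hP : IsVectorSpacePartition P) (hbot : ⊥ ∉ P) :
    #P ≡ 1 [MOD Nat.card F] := by
  have hmod {k : ℕ} (hk : k ≠ 0) : Nat.card F ^ k ≡ 0 [MOD Nat.card F] :=
    Nat.modEq_zero_iff_dvd.mpr (dvd_pow_self _ hk)
  have hsum : ∑ U ∈ P, Nat.card F ^ finrank F U ≡ 0 [MOD Nat.card F] := by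
    rw [← sum_const_zero (s := P)]
    exact Nat.ModEq.sum fun U hU ↦ hmod <| mt Submodule.finrank_eq_zero.mp <|
      ne_of_mem_of_not_mem hU hbot
  calc #P = 0 + #P := (zero_add _).symm
    _ ≡ Nat.card F ^ finrank F V + #P [MOD Nat.card F] :=
      (hmod finrank_pos.ne').symm.add_right _
    _ = ∑ U ∈ P, Nat.card F ^ finrank F U + 1 := hP.sum_card_add_one.symm
    _ ≡ 0 + 1 [MOD Nat.card F] := hsum.add_right _

open scoped Classical in
lemma sum_pow_finrank_sub_one (hP : IsVectorSpacePartition P) {f : Dual F V} (hf : f ≠ 0) :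
    ∑ U ∈ P with ¬ U ≤ LinearMap.ker f, Nat.card F ^ (finrank F U - 1) =
      Nat.card F ^ (finrank F V - 1) := by
  have := Module.finite_of_finite F (M := V)
  rw [← ncard_apply_eq_one hf, ← hP.sum_ncard_inter (by simp), sum_filter]
  refine sum_congr rfl fun U _ ↦ ?_
  split_ifs with hU
  · have hempty : (U : Set V) ∩ {x | f x = 1} = ∅ := by
      refine Set.eq_empty_of_forall_notMem fun x ⟨hxU, hx⟩ ↦ ?_
      exact zero_ne_one ((LinearMap.mem_ker.mp (hU hxU)).symm.trans hx)
    rw [hempty, Set.ncard_empty]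
  · exact (ncard_inter_apply_eq_one hU).symm

variable {a b : ℕ}

lemma le_finrank_of_dvd_card (hP : IsVectorSpacePartition P) (ha : 1 ≤ a)
    (hdim : ∀ U ∈ P, finrank F U = a ∨ b ≤ finrank F U)
    (hne : (membersOfFinrank P a).Nonempty)
    (hdvd : Nat.card F ∣ #(membersOfFinrank P a)) : b ≤ finrank F V := by
  by_contra! hlt
  have hdim' : ∀ U ∈ P, finrank F U = a := fun U hU ↦
    (hdim U hU).resolve_right ((U.finrank_le.trans_lt hlt).not_ge)
  have hbot : ⊥ ∉ P := by
    intro h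
    have ha0 := hdim' ⊥ h
    rw [finrank_bot] at ha0
    omega
  obtain ⟨U, hU⟩ := hne
  have : Nontrivial V := nontrivial_of_finrank_pos <|
    ha.trans ((mem_filter.mp hU).2.symm.le.trans U.finrank_le)
  rw [membersOfFinrank, filter_true_of_mem hdim', ← Nat.modEq_zero_iff_dvd] at hdvd
  have hdvd_one := Nat.modEq_zero_iff_dvd.mp ((hP.card_modEq_one hbot).symm.trans hdvd)
  exact Finite.one_lt_card.ne' (Nat.dvd_one.mp hdvd_one)

open scoped Classical in
lemma pow_dvd_card_filter_not_le_ker (hP : IsVectorSpacePartition P) (ha : 1 ≤ a) (hab : a ≤ b)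
    (hdim : ∀ U ∈ P, finrank F U = a ∨ b ≤ finrank F U) (hb : b ≤ finrank F V)
    {f : Dual F V} (hf : f ≠ 0) :
    Nat.card F ^ (b - a) ∣ #{U ∈ membersOfFinrank P a | ¬ U ≤ LinearMap.ker f} := by
  set q := Nat.card F
  set R := {U ∈ P | ¬ U ≤ LinearMap.ker f}
  have hsum : ∑ U ∈ R, q ^ (finrank F U - 1) = q ^ (finrank F V - 1) :=
    hP.sum_pow_finrank_sub_one hf
  rw [← sum_filter_add_sum_filter_not _ (fun U : Submodule F V ↦ finrank F U = a),
    filter_comm, ← membersOfFinrank] at hsum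
  have hsmall : ∑ U ∈ membersOfFinrank P a with ¬ U ≤ LinearMap.ker f, q ^ (finrank F U - 1) =
      #{U ∈ membersOfFinrank P a | ¬ U ≤ LinearMap.ker f} * q ^ (a - 1) :=
    sum_const_nat fun U hU ↦ by rw [(mem_filter.mp (mem_filter.mp hU).1).2]
  have hlarge : q ^ (b - 1) ∣ ∑ U ∈ R.filter fun U : Submodule F V ↦ ¬ finrank F U = a,
      q ^ (finrank F U - 1) := by
    refine dvd_sum fun U hU ↦ pow_dvd_pow q (Nat.sub_le_sub_right ?_ 1)
    obtain ⟨hU, hUa⟩ := mem_filter.mp hU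
    exact (hdim U (mem_filter.mp hU).1).resolve_left hUa
  have htotal : q ^ (b - 1) ∣ q ^ (finrank F V - 1) := pow_dvd_pow q (Nat.sub_le_sub_right hb 1)
  have hexp : b - 1 = b - a + (a - 1) := by omega
  rw [← hsum, Nat.dvd_add_left hlarge, hsmall, hexp, pow_add] at htotal
  exact Nat.dvd_of_mul_dvd_mul_right (Nat.pow_pos Nat.card_pos) htotal

open scoped Classical in
lemma pow_dvd_card_filter_le_ker (hP : IsVectorSpacePartition P) (ha : 1 ≤ a) (hab : a ≤ b)
    (hdim : ∀ U ∈ P, finrank F U = a ∨ b ≤ finrank F U) (hb : b ≤ finrank F V)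
    (hdvd : Nat.card F ^ (b - a) ∣ #(membersOfFinrank P a)) (f : Dual F V) :
    Nat.card F ^ (b - a) ∣ #{U ∈ membersOfFinrank P a | U ≤ LinearMap.ker f} := by
  rcases eq_or_ne f 0 with rfl | hf
  · simpa only [LinearMap.ker_zero, le_top, filter_true] using hdvd
  · rw [← card_filter_add_card_filter_not (fun U : Submodule F V ↦ U ≤ LinearMap.ker f)] at hdvd
    exact (Nat.dvd_add_left (hP.pow_dvd_card_filter_not_le_ker ha hab hdim hb hf)).mp hdvd

end IsVectorSpacePartition

lemma apply_eq_apply_zero_or_apply_one_le {α : Type*} [Preorder α] {l : ℕ} (hl : 2 ≤ l)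
    {d : Fin l → α} (hd : Monotone d) (i : Fin l) :
    d i = d ⟨0, by omega⟩ ∨ d ⟨1, by omega⟩ ≤ d i := by
  rcases Nat.eq_zero_or_pos i.val with h | h
  · exact .inl (congrArg d (Fin.ext h))
  · exact .inr (hd h)

theorem heden_tail_iv_general {F V : Type*} [Field F] [Finite F] [AddCommGroup V] [Module F V]
    [FiniteDimensional F V] {P : Finset (Submodule F V)} (hP : IsVectorSpacePartition P) {a b : ℕ}
    (ha : 1 ≤ a) (hab : 2 * a ≤ b) (hdim : ∀ U ∈ P, finrank F U = a ∨ b ≤ finrank F U)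
    (hne : (membersOfFinrank P a).Nonempty)
    (hdvd : Nat.card F ^ (b - a) ∣ #(membersOfFinrank P a)) :
    Nat.card F ^ b ≤ #(membersOfFinrank P a) := by
  have hb : b ≤ finrank F V :=
    hP.le_finrank_of_dvd_card ha hdim hne ((dvd_pow_self _ (by omega)).trans hdvd)
  have hdisj : (membersOfFinrank P a : Set (Submodule F V)).PairwiseDisjoint id :=
    hP.pairwiseDisjoint.subset (filter_subset _ P)
  have hlt : Nat.card F ^ (b - a) * Nat.card F ^ a <
      #(membersOfFinrank P a) + Nat.card F ^ a :=
    mul_pow_lt_card_add_pow (fun U hU ↦ (mem_filter.mp hU).2) hdisj hne (hab.trans hb)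
      (hP.pow_dvd_card_filter_le_ker ha (by omega) hdim hb hdvd)
  rw [← pow_add, Nat.sub_add_cancel (by omega)] at hlt
  have hpow : Nat.card F ^ a ≤ Nat.card F ^ (b - a) := Nat.pow_le_pow_right Nat.card_pos (by omega)
  exact Nat.le_of_lt_add_of_dvd (hlt.trans_le (Nat.add_le_add_left hpow _))
    (pow_dvd_pow _ (Nat.sub_le b a)) hdvd

/-- Heden Theorem 1(iv): if `q^{d_2-d_1} ∣ u_1` and `d_2 ≥ 2d_1`, then `u_1 ≥ q^{d_2}`.
Here `d 0 = d_1`, `d 1 = d_2`. -/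
theorem heden_tail_iv
    {F : Type} [Field F] [Fintype F] (q v l : ℕ)
    (hq : q = Fintype.card F) (hl : 2 ≤ l)
    (d u : Fin l → ℕ) (hd : StrictMono d) (hd1 : 1 ≤ d ⟨0, by omega⟩)
    (hu1 : 0 < u ⟨0, by omega⟩) (hu2 : 0 < u ⟨1, by omega⟩)
    (P : Finset (Submodule F (Fin v → F)))
    (hpart : ∀ x : Fin v → F, x ≠ 0 →
      ∃! U : Submodule F (Fin v → F), U ∈ P ∧ x ∈ U)
    (htype : ∀ U ∈ P, ∃ i : Fin l, Module.finrank F ↥U = d i)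
    (hcount : ∀ i : Fin l, u i = Set.ncard
      {U : Submodule F (Fin v → F) | U ∈ P ∧ Module.finrank F ↥U = d i})
    (hdvd : q ^ (d ⟨1, by omega⟩ - d ⟨0, by omega⟩) ∣ u ⟨0, by omega⟩)
    (hcase : 2 * d ⟨0, by omega⟩ ≤ d ⟨1, by omega⟩) :
    q ^ d ⟨1, by omega⟩ ≤ u ⟨0, by omega⟩ := by
  subst hq
  simp only [hcount, ncard_setOf_finrank_eq, ← Nat.card_eq_fintype_card] at hu1 hdvd ⊢
  exact heden_tail_iv_general hpart hd1 hcase (fun U hU ↦ (htype U hU).elim fun i hi ↦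
    hi ▸ apply_eq_apply_zero_or_apply_one_le hl hd.monotone i) (card_pos.mp hu1) hdvd
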